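/- Let n ≥ 1 and for a subset A of [n+1] let v_A ∈ H denote the orthogonal projection onto H of the vector 2χ_A − j, where χ_A is the characteristic vector of A and j = (1, …, 1). Then for any two distinct subsets A, B of [n+1] with ∅ ≠ A, B ≠ [n+1]: ‖v_A − v_B‖_Z = 1 if A ⊆ B or B ⊆ A, and ‖v_A − v_B‖_Z = 2 otherwise (i.e., if A ⊄ B and B ⊄ A). -/

import Mathlib

/-- The norm of the space `M_Z^n`: `‖x‖_Z = ½(maxᵢ x(i) − minᵢ x(i))`. -/
noncomputable def normZ {n : ℕ} (x : Fin (n + 1) → ℝ) : ℝ :=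
  (Finset.univ.sup' Finset.univ_nonempty x - Finset.univ.inf' Finset.univ_nonempty x) / 2

/-- The orthogonal projection of `ℝ^{n+1}` onto the hyperplane `H = {x : Σᵢ x(i) = 0}`
(along the all-ones vector). -/
noncomputable def projH {n : ℕ} (x : Fin (n + 1) → ℝ) : Fin (n + 1) → ℝ :=
  fun i => x i - (∑ j, x j) / (n + 1)

/-- The vertex of `Z_n` associated to a subset `A` of `[n+1]`: the orthogonal
projection onto `H` of `2χ_A − j`. -/
noncomputable def vertexZ {n : ℕ} (A : Finset (Fin (n + 1))) : Fin (n + 1) → ℝ :=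
  projH fun i => 2 * (if i ∈ A then (1 : ℝ) else 0) - 1

/-!
`normZ` is half the oscillation `max - min`, so it is absolutely homogeneous and unchanged by adding
constants. In particular it does not see the projection to `H`, and `‖v_A - v_B‖_Z` is the
oscillation of `χ_A - χ_B`. For `A ⊂ B` this function takes exactly the values `-1` and `0`, and
for incomparable `A` and `B` both extreme values `1` and `-1` are attained.
-/

section Oscillation

variable {n : ℕ} {x : Fin (n + 1) → ℝ} {m M : ℝ}

theorem normZ_eq_of_isGreatest_of_isLeast (hM : IsGreatest (Set.range x) M)
    (hm : IsLeast (Set.range x) m) : normZ x = (M - m) / 2 := by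
  rw [normZ, Finset.sup'_univ_eq_ciSup, Finset.inf'_univ_eq_ciInf, iSup, iInf,
    hM.csSup_eq, hm.csInf_eq]

theorem normZ_mul_add_const (x : Fin (n + 1) → ℝ) (a b : ℝ) :
    normZ (fun i => a * x i + b) = |a| * normZ x := by
  obtain ⟨i, hi⟩ := Finite.exists_max x
  obtain ⟨j, hj⟩ := Finite.exists_min x
  have greatest : IsGreatest (Set.range x) (x i) :=
    ⟨Set.mem_range_self i, Set.forall_mem_range.mpr hi⟩
  have least : IsLeast (Set.range x) (x j) :=
    ⟨Set.mem_range_self j, Set.forall_mem_range.mpr hj⟩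
  have range_eq : Set.range (fun i => a * x i + b) = (fun t => a * t + b) '' Set.range x :=
    Set.range_comp (fun t => a * t + b) x
  rw [normZ_eq_of_isGreatest_of_isLeast greatest least]
  rcases le_total 0 a with ha | ha
  · have mono : Monotone fun t : ℝ => a * t + b := fun s t hst => by dsimp only; gcongr
    rw [normZ_eq_of_isGreatest_of_isLeast (range_eq ▸ mono.map_isGreatest greatest)
      (range_eq ▸ mono.map_isLeast least), abs_of_nonneg ha]
    ring
  · have anti : Antitone fun t : ℝ => a * t + b := fun s t hst =>
      add_le_add_left (mul_le_mul_of_nonpos_left hst ha) b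
    rw [normZ_eq_of_isGreatest_of_isLeast (range_eq ▸ anti.map_isLeast least)
      (range_eq ▸ anti.map_isGreatest greatest), abs_of_nonpos ha]
    ring

theorem normZ_sub_comm (x y : Fin (n + 1) → ℝ) : normZ (x - y) = normZ (y - x) := by
  have sub_eq : x - y = fun i => -1 * (y - x) i + 0 := by
    ext i
    simp only [Pi.sub_apply]
    ring
  rw [sub_eq, normZ_mul_add_const, abs_neg, abs_one, one_mul]

end Oscillation

section Indicator

variable {n : ℕ} {S T : Set (Fin (n + 1))}

theorem normZ_indicator_one (hS : S.Nonempty) (hS' : S ≠ Set.univ) :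
    normZ (S.indicator 1) = 1 / 2 := by
  obtain ⟨i, hi⟩ := hS
  obtain ⟨j, hj⟩ := (Set.ne_univ_iff_exists_notMem S).mp hS'
  have greatest : IsGreatest (Set.range (S.indicator (1 : Fin (n + 1) → ℝ))) 1 :=
    ⟨⟨i, Set.indicator_of_mem hi 1⟩, Set.forall_mem_range.mpr fun _ =>
      Set.indicator_apply_le' (fun _ => le_rfl) fun _ => zero_le_one⟩
  have least : IsLeast (Set.range (S.indicator (1 : Fin (n + 1) → ℝ))) 0 :=
    ⟨⟨j, Set.indicator_of_notMem hj 1⟩, Set.forall_mem_range.mpr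
      (Set.indicator_nonneg fun _ _ => zero_le_one)⟩
  rw [normZ_eq_of_isGreatest_of_isLeast greatest least, sub_zero]

theorem normZ_indicator_sub_indicator_of_not_subset (hST : ¬ S ⊆ T) (hTS : ¬ T ⊆ S) :
    normZ (S.indicator 1 - T.indicator 1) = 1 := by
  obtain ⟨i, hiS, hiT⟩ := Set.not_subset.mp hST
  obtain ⟨j, hjT, hjS⟩ := Set.not_subset.mp hTS
  have nonneg (U : Set (Fin (n + 1))) (k) : 0 ≤ U.indicator (1 : Fin (n + 1) → ℝ) k :=
    Set.indicator_nonneg (fun _ _ => zero_le_one) k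
  have le_one (U : Set (Fin (n + 1))) (k) : U.indicator (1 : Fin (n + 1) → ℝ) k ≤ 1 :=
    Set.indicator_apply_le' (fun _ => le_rfl) fun _ => zero_le_one
  have greatest : IsGreatest (Set.range (S.indicator 1 - T.indicator 1)) (1 : ℝ) :=
    ⟨⟨i, by simp [hiS, hiT]⟩, Set.forall_mem_range.mpr fun k => by
      rw [Pi.sub_apply]; linarith [le_one S k, nonneg T k]⟩
  have least : IsLeast (Set.range (S.indicator 1 - T.indicator 1)) (-1 : ℝ) :=
    ⟨⟨j, by simp [hjS, hjT]⟩, Set.forall_mem_range.mpr fun k => by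
      rw [Pi.sub_apply]; linarith [nonneg S k, le_one T k]⟩
  rw [normZ_eq_of_isGreatest_of_isLeast greatest least]
  norm_num

end Indicator

section Vertex

variable {n : ℕ} {A B : Finset (Fin (n + 1))}

theorem vertexZ_apply (A : Finset (Fin (n + 1))) (i : Fin (n + 1)) :
    vertexZ A i = 2 * (A : Set (Fin (n + 1))).indicator 1 i - 2 * (A.card / (n + 1)) := by
  have sum_eq : ∑ j, (2 * (if j ∈ A then (1 : ℝ) else 0) - 1) = 2 * A.card - (n + 1) := by
    simp [mul_comm]
  simp only [vertexZ, projH, sum_eq, Set.indicator_apply, Finset.mem_coe, Pi.one_apply]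
  field_simp
  ring

theorem normZ_vertexZ_sub_vertexZ (A B : Finset (Fin (n + 1))) :
    normZ (vertexZ A - vertexZ B) =
      2 * normZ ((A : Set (Fin (n + 1))).indicator 1 - (B : Set (Fin (n + 1))).indicator 1) := by
  have sub_eq : vertexZ A - vertexZ B = fun i =>
      2 * ((A : Set (Fin (n + 1))).indicator 1 - (B : Set (Fin (n + 1))).indicator 1 :
        Fin (n + 1) → ℝ) i + 2 * ((B.card - A.card) / (n + 1)) := by
    ext i
    simp only [Pi.sub_apply, vertexZ_apply]
    ring
  rw [sub_eq, normZ_mul_add_const, abs_two]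

theorem normZ_vertexZ_sub_vertexZ_of_ssubset (hAB : A ⊂ B) (hBA : B \ A ≠ Finset.univ) :
    normZ (vertexZ A - vertexZ B) = 1 := by
  have nonempty : ((B : Set (Fin (n + 1))) \ A).Nonempty :=
    Set.nonempty_of_ssubset (Finset.coe_ssubset.mpr hAB)
  have ne_univ : (B : Set (Fin (n + 1))) \ A ≠ Set.univ := by
    rwa [← Finset.coe_sdiff, Ne, Finset.coe_eq_univ]
  rw [normZ_sub_comm, normZ_vertexZ_sub_vertexZ,
    ← Set.indicator_sdiff (Finset.coe_subset.mpr hAB.subset), normZ_indicator_one nonempty ne_univ]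
  norm_num

theorem normZ_vertexZ_sub_vertexZ_of_not_subset (hAB : ¬ A ⊆ B) (hBA : ¬ B ⊆ A) :
    normZ (vertexZ A - vertexZ B) = 2 := by
  rw [normZ_vertexZ_sub_vertexZ, normZ_indicator_sub_indicator_of_not_subset
    (mt Finset.coe_subset.mp hAB) (mt Finset.coe_subset.mp hBA), mul_one]

end Vertex

/-- For distinct proper nonempty subsets `A, B` of `[n+1]`, the distance in `M_Z^n`
between the corresponding vertices `v_A, v_B` of `Z_n` is `1` if `A ⊆ B` or `B ⊆ A`,
and `2` otherwise. -/
theorem dist_between_vertices (n : ℕ) (hn : 1 ≤ n) (A B : Finset (Fin (n + 1)))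
    (hA : A.Nonempty) (hA' : A ≠ Finset.univ)
    (hB : B.Nonempty) (hB' : B ≠ Finset.univ) (hAB : A ≠ B) :
    ((A ⊆ B ∨ B ⊆ A) → normZ (vertexZ A - vertexZ B) = 1) ∧
    (¬ A ⊆ B → ¬ B ⊆ A → normZ (vertexZ A - vertexZ B) = 2) := by
  refine ⟨?_, normZ_vertexZ_sub_vertexZ_of_not_subset⟩
  rintro (h | h)
  · exact normZ_vertexZ_sub_vertexZ_of_ssubset (h.ssubset_of_ne hAB)
      fun hu => hB' (eq_top_mono Finset.sdiff_subset hu)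
  · rw [normZ_sub_comm]
    exact normZ_vertexZ_sub_vertexZ_of_ssubset (h.ssubset_of_ne hAB.symm)
      fun hu => hA' (eq_top_mono Finset.sdiff_subset hu)
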